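/- Let V be a finite-dimensional irreducible □_q-module of type 1 and diameter d. Regard V as a U_q^+-module via the algebra homomorphism κ: U_q^+ → □_q sending x ↦ x_0 and y ↦ x_2 (so x acts on V as x_0 and y acts as x_2). Then this U_q^+-module V is irreducible, the actions of x and y on V are not nilpotent, and each of x, y acts semisimply on V with set of distinct eigenvalues {q^{d−2n} : 0 ≤ n ≤ d}; that is, V is a NonNil irreducible U_q^+-module of type (1,1). -/

import Mathlib

/-!
Let `X_i` be the action of `x_i`, and for a set `I` of integers let `X_i(I)` be the sum of the
eigenspaces of `X_i` for the eigenvalues `q^m`, `m ∈ I`. The `q`-Weyl relation says that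
`X_{i+1} - q^{-m}` maps the `q^m`-eigenspace of `X_i` into the `q^{m-2}`-eigenspace, and
symmetrically with the two operators exchanged and `q` inverted. By triangularity
`X_i(I) = X_{i+1}(-I)` for every lower set `I` of integers.

Let `W` be invariant under `X_0` and `X_2`, so that it splits along `X_0(-I) ⊕ X_0(-Iᶜ)` and along
`X_2(-I) ⊕ X_2(-Iᶜ)`. Now `X_2(-I) = X_1(I)` and `X_0(-Iᶜ) = X_1(Iᶜ)` are disjoint, and so are
`X_0(-I) = X_3(I)` and `X_2(-Iᶜ) = X_3(Iᶜ)`. Hence `W` meets the first pair in subspaces of total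
dimension at most `dim W`, and likewise the second pair. The four dimensions add up to `2 dim W`,
so `W` splits along `X_1(I) ⊕ X_1(Iᶜ)` for every lower set `I`. This forces `W` to be spanned by
eigenvectors of `X_1`. By the cyclic symmetry `W` is also `X_3`-invariant, so it is a
`□_q`-submodule.
-/

noncomputable section

open FreeAlgebra

variable (F : Type) [Field F]

/-- The defining relations of the algebra `□_q` (Terwilliger), on the free algebra
with generators `x_i`, `i ∈ ℤ/4ℤ`. -/
inductive BoxRel (q : F) : FreeAlgebra F (ZMod 4) → FreeAlgebra F (ZMod 4) → Prop
  | rel1 (i : ZMod 4) : BoxRel q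
      (q • (ι F i * ι F (i + 1)) - q⁻¹ • (ι F (i + 1) * ι F i))
      ((q - q⁻¹) • (1 : FreeAlgebra F (ZMod 4)))
  | rel2 (i : ZMod 4) : BoxRel q
      (ι F i ^ 3 * ι F (i + 2) +
        ((q ^ 3 - (q⁻¹) ^ 3) / (q - q⁻¹)) • (ι F i * ι F (i + 2) * ι F i ^ 2))
      (((q ^ 3 - (q⁻¹) ^ 3) / (q - q⁻¹)) • (ι F i ^ 2 * ι F (i + 2) * ι F i) +
        ι F (i + 2) * ι F i ^ 3)

/-- The algebra `□_q`, presented by generators and relations. -/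
abbrev BoxQ (q : F) : Type := RingQuot (BoxRel F q)

/-- The generators `x_i` of `□_q`. -/
def bx (q : F) (i : ZMod 4) : BoxQ F q :=
  RingQuot.mkAlgHom F (BoxRel F q) (ι F i)

/-- `f` acts semisimply: `V` is spanned by the eigenspaces of `f`. -/
def SemisimpleOn {V : Type} [AddCommGroup V] [Module F V] (f : Module.End F V) : Prop :=
  (⨆ θ : F, Module.End.eigenspace f θ) = ⊤

/-- The set of (distinct) eigenvalues of `f`. -/
def EigSet {V : Type} [AddCommGroup V] [Module F V] (f : Module.End F V) : Set F :=
  {θ : F | Module.End.eigenspace f θ ≠ ⊥}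

/-- The representation `π` of `A` on `V` is irreducible. -/
def IsIrrep {A V : Type} [Ring A] [Algebra F A] [AddCommGroup V] [Module F V]
    (π : A →ₐ[F] Module.End F V) : Prop :=
  Nontrivial V ∧ ∀ W : Submodule F V, (∀ a : A, ∀ v ∈ W, π a v ∈ W) → W = ⊥ ∨ W = ⊤

/-- Isomorphism of representations of `A`. -/
def RepIso {A V W : Type} [Ring A] [Algebra F A] [AddCommGroup V] [Module F V]
    [AddCommGroup W] [Module F W]
    (π : A →ₐ[F] Module.End F V) (π' : A →ₐ[F] Module.End F W) : Prop :=
  ∃ σ : V ≃ₗ[F] W, ∀ (a : A) (v : V), σ (π a v) = π' a (σ v)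

/-- The `□_q`-module given by `π` has type `1` and diameter `d`: each generator `x_i`
acts semisimply with set of distinct eigenvalues `{q^(d-2n) : 0 ≤ n ≤ d}`. -/
def Type1Diam (q : F) {V : Type} [AddCommGroup V] [Module F V]
    (π : BoxQ F q →ₐ[F] Module.End F V) (d : ℕ) : Prop :=
  ∀ i : ZMod 4, SemisimpleOn F (π (bx F q i)) ∧
    EigSet F (π (bx F q i)) =
      {θ : F | ∃ n : ℕ, n ≤ d ∧ θ = q ^ ((d : ℤ) - 2 * (n : ℤ))}

/-- The defining relations of `U_q^+`, the positive part of `U_q(L(sl₂))`;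
the standard generators are `x = ι F true` and `y = ι F false`. -/
inductive UqpRel (q : F) : FreeAlgebra F Bool → FreeAlgebra F Bool → Prop
  | relx : UqpRel q
      (ι F true ^ 3 * ι F false +
        ((q ^ 3 - (q⁻¹) ^ 3) / (q - q⁻¹)) • (ι F true * ι F false * ι F true ^ 2))
      (((q ^ 3 - (q⁻¹) ^ 3) / (q - q⁻¹)) • (ι F true ^ 2 * ι F false * ι F true) +
        ι F false * ι F true ^ 3)
  | rely : UqpRel q
      (ι F false ^ 3 * ι F true +
        ((q ^ 3 - (q⁻¹) ^ 3) / (q - q⁻¹)) • (ι F false * ι F true * ι F false ^ 2))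
      (((q ^ 3 - (q⁻¹) ^ 3) / (q - q⁻¹)) • (ι F false ^ 2 * ι F true * ι F false) +
        ι F true * ι F false ^ 3)

/-- The algebra `U_q^+`. -/
abbrev Uqp (q : F) : Type := RingQuot (UqpRel F q)

/-- The standard generator `x` of `U_q^+`. -/
def ux (q : F) : Uqp F q := RingQuot.mkAlgHom F (UqpRel F q) (ι F true)

/-- The standard generator `y` of `U_q^+`. -/
def uy (q : F) : Uqp F q := RingQuot.mkAlgHom F (UqpRel F q) (ι F false)

section Splitting

theorem le_inf_sup_inf_of_disjoint {K V : Type*} [DivisionRing K] [AddCommGroup V] [Module K V]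
    {W A B C D : Submodule K V} [FiniteDimensional K W]
    (hAB : W ≤ W ⊓ A ⊔ W ⊓ B) (hCD : W ≤ W ⊓ C ⊔ W ⊓ D)
    (hCB : Disjoint C B) (hAD : Disjoint A D) :
    W ≤ W ⊓ C ⊔ W ⊓ B := by
  have le_of_split {X Y : Submodule K V} (h : W ≤ W ⊓ X ⊔ W ⊓ Y) :
      Module.finrank K W ≤ Module.finrank K ↥(W ⊓ X) + Module.finrank K ↥(W ⊓ Y) :=
    (Submodule.finrank_mono h).trans (Submodule.finrank_add_le_finrank_add_finrank _ _)
  have sup_eq_of_disjoint {X Y : Submodule K V} (h : Disjoint X Y) :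
      Module.finrank K ↥(W ⊓ X ⊔ W ⊓ Y) =
        Module.finrank K ↥(W ⊓ X) + Module.finrank K ↥(W ⊓ Y) := by
    rw [← Submodule.finrank_sup_add_finrank_inf_eq,
      (h.mono inf_le_right inf_le_right).eq_bot, finrank_bot, add_zero]
  have sup_le_self (X Y : Submodule K V) : W ⊓ X ⊔ W ⊓ Y ≤ W := sup_le inf_le_left inf_le_left
  have hAD_le := Submodule.finrank_mono (sup_le_self A D)
  refine (Submodule.eq_of_le_of_finrank_le (sup_le_self C B) ?_).ge
  linarith [le_of_split hAB, le_of_split hCD, sup_eq_of_disjoint hCB, sup_eq_of_disjoint hAD]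

variable {ι R M : Type*} [LinearOrder ι] [Ring R] [AddCommGroup M] [Module R M]

theorem inf_biSup_finset_le_iSup_inf {E : ι → Submodule R M} (hE : iSupIndep E)
    {W : Submodule R M}
    (hW : ∀ c, W ≤ W ⊓ (⨆ i ∈ Set.Iio c, E i) ⊔ W ⊓ (⨆ i ∈ (Set.Iio c)ᶜ, E i))
    (s : Finset ι) : W ⊓ (⨆ i ∈ s, E i) ≤ ⨆ i, W ⊓ E i := by
  induction s using Finset.induction_on_max with
  | empty => simp
  | insert c s hc ih =>
    rintro w ⟨hwW, hws⟩
    rw [Finset.iSup_insert] at hws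
    obtain ⟨e, he, l, hl, hel⟩ := Submodule.mem_sup.mp hws
    obtain ⟨x, ⟨hxW, hx⟩, y, ⟨hyW, hy⟩, rfl⟩ := Submodule.mem_sup.mp (hW c hwW)
    have hlc : l ∈ ⨆ i ∈ Set.Iio c, E i :=
      (biSup_mono hc : ⨆ i ∈ s, E i ≤ ⨆ i ∈ Set.Iio c, E i) hl
    have hec : e ∈ ⨆ i ∈ (Set.Iio c)ᶜ, E i :=
      le_biSup E (show c ∈ (Set.Iio c)ᶜ from lt_irrefl c) he
    -- Both decompositions of `x + y` are along the cut at `c`, so they coincide.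
    have hxl : x - l = e - y := by rw [sub_eq_sub_iff_add_eq_add, hel]
    have hzero : x - l = 0 :=
      Submodule.disjoint_def.mp (hE.disjoint_biSup_biSup disjoint_compl_right) _
        (sub_mem hx hlc) (hxl ▸ sub_mem hec hy)
    obtain rfl : x = l := sub_eq_zero.mp hzero
    obtain rfl : e = y := sub_eq_zero.mp (hxl ▸ hzero)
    exact add_mem (ih ⟨hxW, hl⟩) (le_iSup (fun i => W ⊓ E i) c ⟨hyW, he⟩)

theorem le_iSup_inf_of_forall_cut {E : ι → Submodule R M} (hE : iSupIndep E)
    (hE_top : ⨆ i, E i = ⊤) {W : Submodule R M}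
    (hW : ∀ c, W ≤ W ⊓ (⨆ i ∈ Set.Iio c, E i) ⊔ W ⊓ (⨆ i ∈ (Set.Iio c)ᶜ, E i)) :
    W ≤ ⨆ i, W ⊓ E i := by
  intro w hw
  obtain ⟨s, hs⟩ :=
    (Submodule.mem_iSup_iff_exists_finset (p := E)).mp (hE_top ▸ Submodule.mem_top (x := w))
  exact inf_biSup_finset_le_iSup_inf hE hW s ⟨hw, hs⟩

end Splitting

section Eigenspaces

variable {K V : Type*} [Field K] [AddCommGroup V] [Module K V] {f : Module.End K V}

theorem mem_invtSubmodule_of_le_iSup_inf_eigenspace {ι : Type*} {a : ι → K} {W : Submodule K V}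
    (hW : W ≤ ⨆ i, W ⊓ f.eigenspace (a i)) : W ∈ f.invtSubmodule := by
  refine hW.trans (iSup_le fun i v hv => ?_)
  rw [Submodule.mem_comap, Module.End.mem_eigenspace_iff.mp hv.2]
  exact W.smul_mem _ hv.1

theorem eigenspace_eq_bot_of_notMem_range {ι : Type*} {a : ι → K}
    (hf : ⨆ i, f.eigenspace (a i) = ⊤) {θ : K} (hθ : θ ∉ Set.range a) :
    f.eigenspace θ = ⊥ := by
  refine (f.eigenspaces_iSupIndep θ).eq_bot_of_le (le_top.trans (hf.ge.trans (iSup_le fun i => ?_)))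
  exact le_iSup₂_of_le (a i) (fun h => hθ ⟨i, h⟩) le_rfl

theorem le_iSup_inf_eigenspace_of_mem_invtSubmodule [FiniteDimensional K V] {ι : Type*}
    {a : ι → K} (hf : ⨆ i, f.eigenspace (a i) = ⊤) {W : Submodule K V}
    (hW : W ∈ f.invtSubmodule) : W ≤ ⨆ i, W ⊓ f.eigenspace (a i) := by
  have hsup : ⨆ θ, f.eigenspace θ = ⊤ :=
    top_le_iff.mp (hf.ge.trans (iSup_le fun i => le_iSup f.eigenspace (a i)))
  have hdecomp : W ⊓ ⨆ θ, f.eigenspace θ = ⨆ θ, W ⊓ f.eigenspace θ :=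
    Submodule.inf_iSup_genEigenspace hW 1
  rw [hsup, inf_top_eq] at hdecomp
  refine hdecomp.le.trans (iSup_le fun θ => ?_)
  by_cases hθ : θ ∈ Set.range a
  · obtain ⟨i, rfl⟩ := hθ
    exact le_iSup (fun i => W ⊓ f.eigenspace (a i)) i
  · simp [eigenspace_eq_bot_of_notMem_range hf hθ]

theorem mem_eigenspace_sup_of_sub_smul_mem {S : Set K} {θ : K} (hθ : θ ∉ S) {v : V}
    (hv : f v - θ • v ∈ ⨆ μ ∈ S, f.eigenspace μ) :
    v ∈ f.eigenspace θ ⊔ ⨆ μ ∈ S, f.eigenspace μ := by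
  have hsurj : ⨆ μ ∈ S, f.eigenspace μ ≤
      (⨆ μ ∈ S, f.eigenspace μ).map (f - algebraMap K (Module.End K V) θ) := by
    refine iSup₂_le fun μ hμ w hw => ?_
    have hne : μ - θ ≠ 0 := sub_ne_zero.mpr fun h => hθ (h ▸ hμ)
    refine ⟨(μ - θ)⁻¹ • w, Submodule.smul_mem _ _ (le_biSup f.eigenspace hμ hw), ?_⟩
    rw [map_smul, LinearMap.sub_apply, Module.End.mem_eigenspace_iff.mp hw,
      Module.algebraMap_end_apply, ← sub_smul, inv_smul_smul₀ hne]
  obtain ⟨u, hu, hfu⟩ := hsurj hv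
  rw [LinearMap.sub_apply, Module.algebraMap_end_apply] at hfu
  have hvu : v - u ∈ f.eigenspace θ := by
    rw [Module.End.mem_eigenspace_iff, map_sub, smul_sub, ← sub_eq_zero, sub_sub_sub_comm, hfu,
      sub_self]
  exact Submodule.mem_sup.mpr ⟨v - u, hvu, u, hu, sub_add_cancel v u⟩

end Eigenspaces

section WeightSpan

open scoped Pointwise

variable {K V : Type*} [Field K] [AddCommGroup V] [Module K V] {q : K}

/-- The sum of the weight spaces of `f` of weight in `I`, where the weight space of weight `m : ℤ`
is the eigenspace for `q ^ m`. -/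
def weightSpan (q : K) (f : Module.End K V) (I : Set ℤ) : Submodule K V :=
  ⨆ m ∈ I, f.eigenspace (q ^ m)

theorem weightSpan_mono (f : Module.End K V) {I J : Set ℤ} (h : I ⊆ J) :
    weightSpan q f I ≤ weightSpan q f J :=
  biSup_mono h

theorem eigenspace_le_weightSpan (f : Module.End K V) {I : Set ℤ} {m : ℤ} (hm : m ∈ I) :
    f.eigenspace (q ^ m) ≤ weightSpan q f I :=
  le_biSup (fun m : ℤ => f.eigenspace (q ^ m)) hm

theorem weightSpan_inv (f : Module.End K V) (I : Set ℤ) :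
    weightSpan q⁻¹ f I = weightSpan q f (-I) := by
  simp only [weightSpan, ← Set.image_neg_eq_neg, iSup_image, inv_zpow']

theorem iSupIndep_eigenspace_zpow (hq : Function.Injective fun m : ℤ => q ^ m)
    (f : Module.End K V) : iSupIndep fun m : ℤ => f.eigenspace (q ^ m) :=
  f.eigenspaces_iSupIndep.comp hq

theorem disjoint_weightSpan (hq : Function.Injective fun m : ℤ => q ^ m) (f : Module.End K V)
    {I J : Set ℤ} (h : Disjoint I J) : Disjoint (weightSpan q f I) (weightSpan q f J) :=
  (iSupIndep_eigenspace_zpow hq f).disjoint_biSup_biSup h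

theorem exists_forall_lt_eigenspace_zpow_eq_bot [FiniteDimensional K V]
    (hq : Function.Injective fun m : ℤ => q ^ m) (f : Module.End K V) :
    ∃ m₀ : ℤ, ∀ m < m₀, f.eigenspace (q ^ m) = ⊥ := by
  obtain ⟨m₀, hm₀⟩ :=
    (WellFoundedGT.finite_ne_bot_of_iSupIndep (iSupIndep_eigenspace_zpow hq f)).bddBelow
  exact ⟨m₀, fun m hm => by_contra fun h => hm.not_ge (hm₀ h)⟩

theorem le_inf_weightSpan_sup_inf_weightSpan_compl [FiniteDimensional K V] {f : Module.End K V}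
    (hf : ⨆ m : ℤ, f.eigenspace (q ^ m) = ⊤) {W : Submodule K V} (hW : W ∈ f.invtSubmodule)
    (I : Set ℤ) : W ≤ W ⊓ weightSpan q f I ⊔ W ⊓ weightSpan q f Iᶜ := by
  refine (le_iSup_inf_eigenspace_of_mem_invtSubmodule hf hW).trans (iSup_le fun m => ?_)
  by_cases hm : m ∈ I
  · exact le_sup_of_le_left (inf_le_inf_left W (eigenspace_le_weightSpan f hm))
  · exact le_sup_of_le_right (inf_le_inf_left W (eigenspace_le_weightSpan f hm))

theorem mem_weightSpan_insert_of_sub_smul_mem (hq : Function.Injective fun m : ℤ => q ^ m)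
    {f : Module.End K V} {I : Set ℤ} {m : ℤ} (hm : m ∉ I) {v : V}
    (hv : f v - q ^ m • v ∈ weightSpan q f I) : v ∈ weightSpan q f (insert m I) := by
  rw [weightSpan, ← iSup_image (f := fun m : ℤ => q ^ m) (g := f.eigenspace)] at hv
  rw [weightSpan, iSup_insert, ← iSup_image (f := fun m : ℤ => q ^ m) (g := f.eigenspace)]
  exact mem_eigenspace_sup_of_sub_smul_mem (hq.mem_set_image.not.mpr hm) hv

end WeightSpan

section QWeyl

open scoped Pointwise

/-- The `q`-Weyl relation between two elements of an algebra, as satisfied by each pair of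
consecutive generators of `□_q`. It is multiplied out by `q - q⁻¹`, as in `BoxRel.rel1`. -/
def IsQWeylPair {K A : Type*} [Field K] [Ring A] [Algebra K A] (q : K) (x y : A) : Prop :=
  q • (x * y) - q⁻¹ • (y * x) = (q - q⁻¹) • (1 : A)

theorem IsQWeylPair.symm {K A : Type*} [Field K] [Ring A] [Algebra K A] {q : K} {x y : A}
    (h : IsQWeylPair q x y) : IsQWeylPair q⁻¹ y x := by
  unfold IsQWeylPair at h ⊢
  rw [inv_inv, ← neg_sub q q⁻¹, neg_smul, ← h, neg_sub]

theorem IsQWeylPair.map {K A B : Type*} [Field K] [Ring A] [Algebra K A] [Ring B] [Algebra K B]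
    {q : K} {x y : A} (h : IsQWeylPair q x y) (φ : A →ₐ[K] B) : IsQWeylPair q (φ x) (φ y) := by
  simpa only [IsQWeylPair, map_sub, map_smul, map_mul, map_one] using congrArg φ h

variable {K V : Type*} [Field K] [AddCommGroup V] [Module K V] {q : K}

theorem ne_zero_of_injective_zpow (hq : Function.Injective fun m : ℤ => q ^ m) : q ≠ 0 := by
  rintro rfl
  exact absurd (@hq 1 2 (by simp)) (by decide)

theorem IsQWeylPair.sub_smul_mem_eigenspace (hq : q ≠ 0) {X Y : Module.End K V}
    (h : IsQWeylPair q X Y) {m : ℤ} {v : V} (hv : v ∈ X.eigenspace (q ^ m)) :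
    Y v - q ^ (-m) • v ∈ X.eigenspace (q ^ (m - 2)) := by
  rw [Module.End.mem_eigenspace_iff] at hv ⊢
  have happly := congrArg (fun f : Module.End K V => q⁻¹ • f v) h
  simp only [LinearMap.sub_apply, LinearMap.smul_apply, Module.End.mul_apply, hv, map_smul,
    Module.End.one_apply, smul_sub, inv_smul_smul₀ hq] at happly
  rw [map_sub, map_smul, hv, eq_add_of_sub_eq happly, zpow_neg, zpow_sub₀ hq, zpow_ofNat]
  match_scalars <;> field_simp
  ring

theorem IsQWeylPair.eigenspace_le_weightSpan_Ici [FiniteDimensional K V]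
    (hq : Function.Injective fun m : ℤ => q ^ m) {X Y : Module.End K V} (h : IsQWeylPair q X Y)
    (m : ℤ) : X.eigenspace (q ^ m) ≤ weightSpan q Y (Set.Ici (-m)) := by
  obtain ⟨m₀, hm₀⟩ := exists_forall_lt_eigenspace_zpow_eq_bot hq X
  induction m using Int.strongRec (m := m₀) with
  | lt m hm => simp [hm₀ m hm]
  | ge m _ ih =>
    intro v hv
    have hstep : Y v - q ^ (-m) • v ∈ weightSpan q Y (Set.Ici (-(m - 2))) :=
      ih (m - 2) (by omega) (h.sub_smul_mem_eigenspace (ne_zero_of_injective_zpow hq) hv)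
    have hnotMem : -m ∉ Set.Ici (-(m - 2)) := by simp
    refine weightSpan_mono Y ?_ (mem_weightSpan_insert_of_sub_smul_mem hq hnotMem hstep)
    exact Set.insert_subset Set.self_mem_Ici (Set.Ici_subset_Ici.mpr (by omega))

theorem IsQWeylPair.weightSpan_le [FiniteDimensional K V]
    (hq : Function.Injective fun m : ℤ => q ^ m) {X Y : Module.End K V} (h : IsQWeylPair q X Y)
    {I : Set ℤ} (hI : IsLowerSet I) : weightSpan q X I ≤ weightSpan q Y (-I) :=
  iSup₂_le fun m hm => (h.eigenspace_le_weightSpan_Ici hq m).trans <|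
    weightSpan_mono Y fun _ hn => hI (neg_le.mp hn) hm

theorem IsQWeylPair.weightSpan_eq [FiniteDimensional K V]
    (hq : Function.Injective fun m : ℤ => q ^ m) {X Y : Module.End K V} (h : IsQWeylPair q X Y)
    {I : Set ℤ} (hI : IsLowerSet I) : weightSpan q X I = weightSpan q Y (-I) := by
  refine (h.weightSpan_le hq hI).antisymm ?_
  have hq_inv : Function.Injective fun m : ℤ => q⁻¹ ^ m := by
    simpa only [inv_zpow', Function.comp_def] using hq.comp neg_injective
  simpa only [weightSpan_inv, neg_neg] using h.symm.weightSpan_le hq_inv hI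

theorem mem_invtSubmodule_of_isQWeylPair_cycle [FiniteDimensional K V]
    (hq : Function.Injective fun m : ℤ => q ^ m) {X₀ X₁ X₂ X₃ : Module.End K V}
    (h₀₁ : IsQWeylPair q X₀ X₁) (h₁₂ : IsQWeylPair q X₁ X₂) (h₂₃ : IsQWeylPair q X₂ X₃)
    (h₃₀ : IsQWeylPair q X₃ X₀) (h₀ : ⨆ m : ℤ, X₀.eigenspace (q ^ m) = ⊤)
    (h₁ : ⨆ m : ℤ, X₁.eigenspace (q ^ m) = ⊤) (h₂ : ⨆ m : ℤ, X₂.eigenspace (q ^ m) = ⊤)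
    {W : Submodule K V} (hW₀ : W ∈ X₀.invtSubmodule) (hW₂ : W ∈ X₂.invtSubmodule) :
    W ∈ X₁.invtSubmodule := by
  refine mem_invtSubmodule_of_le_iSup_inf_eigenspace
    (le_iSup_inf_of_forall_cut (iSupIndep_eigenspace_zpow hq X₁) h₁ fun c => ?_)
  set I := Set.Iio c
  have hI : IsLowerSet I := isLowerSet_Iio c
  have hI' : IsLowerSet (-I)ᶜ := fun _ _ hab ha hb => ha (hI (neg_le_neg hab) hb)
  have neg_compl_neg : -(-I)ᶜ = Iᶜ := by rw [← Set.compl_neg, neg_neg]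
  have h₁₂I : weightSpan q X₁ I = weightSpan q X₂ (-I) := h₁₂.weightSpan_eq hq hI
  have h₃₀I : weightSpan q X₃ I = weightSpan q X₀ (-I) := h₃₀.weightSpan_eq hq hI
  have h₀₁I : weightSpan q X₀ (-I)ᶜ = weightSpan q X₁ Iᶜ :=
    neg_compl_neg ▸ h₀₁.weightSpan_eq hq hI'
  have h₂₃I : weightSpan q X₂ (-I)ᶜ = weightSpan q X₃ Iᶜ :=
    neg_compl_neg ▸ h₂₃.weightSpan_eq hq hI'
  have hsplit₀ := le_inf_weightSpan_sup_inf_weightSpan_compl h₀ hW₀ (-I)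
  have hsplit₂ := le_inf_weightSpan_sup_inf_weightSpan_compl h₂ hW₂ (-I)
  rw [← h₃₀I, h₀₁I] at hsplit₀
  rw [← h₁₂I, h₂₃I] at hsplit₂
  have hdisj (X : Module.End K V) : Disjoint (weightSpan q X I) (weightSpan q X Iᶜ) :=
    disjoint_weightSpan hq X disjoint_compl_right
  exact le_inf_sup_inf_of_disjoint hsplit₀ hsplit₂ (hdisj X₁) (hdisj X₃)

end QWeyl

section BoxModules

variable {F}

theorem injective_zpow_of_forall_pow_ne_one {q : F} (hq0 : q ≠ 0)
    (hq1 : ∀ n : ℕ, 0 < n → q ^ n ≠ 1) : Function.Injective fun m : ℤ => q ^ m := by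
  have hord : ¬ IsOfFinOrder (Units.mk0 q hq0) := by
    rw [← Units.isOfFinOrder_val, Units.val_mk0, isOfFinOrder_iff_pow_eq_one]
    exact fun ⟨n, hn, h⟩ => hq1 n hn h
  intro m n hmn
  refine injective_zpow_iff_not_isOfFinOrder.mpr hord (Units.ext ?_)
  simpa using hmn

theorem mem_invtSubmodule_of_forall_ι {R X M : Type*} [CommRing R] [AddCommGroup M] [Module R M]
    (ρ : FreeAlgebra R X →ₐ[R] Module.End R M) {W : Submodule R M}
    (hW : ∀ i, W ∈ (ρ (ι R i)).invtSubmodule) (a : FreeAlgebra R X) :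
    W ∈ (ρ a).invtSubmodule := by
  induction a using FreeAlgebra.induction with
  | grade0 r =>
    intro v hv
    rw [Submodule.mem_comap, AlgHom.commutes, Module.algebraMap_end_apply]
    exact W.smul_mem r hv
  | grade1 i => exact hW i
  | mul a b ha hb =>
    rw [map_mul]
    exact fun v hv => ha (hb hv)
  | add a b ha hb =>
    rw [map_add]
    exact Module.End.invtSubmodule_inf_invtSubmodule_le_invtSubmodule_add _ _ ⟨ha, hb⟩

variable {q : F} {V : Type} [AddCommGroup V] [Module F V] {π : BoxQ F q →ₐ[F] Module.End F V}

theorem mem_invtSubmodule_of_forall_bx {W : Submodule F V}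
    (hW : ∀ i, W ∈ (π (bx F q i)).invtSubmodule) (a : BoxQ F q) : W ∈ (π a).invtSubmodule := by
  obtain ⟨a, rfl⟩ := RingQuot.mkAlgHom_surjective F (BoxRel F q) a
  exact mem_invtSubmodule_of_forall_ι (π.comp (RingQuot.mkAlgHom F (BoxRel F q))) hW a

theorem isQWeylPair_bx (q : F) (i : ZMod 4) : IsQWeylPair q (bx F q i) (bx F q (i + 1)) := by
  simpa only [IsQWeylPair, bx, map_sub, map_smul, map_mul, map_one] using
    RingQuot.mkAlgHom_rel F (BoxRel.rel1 (q := q) i)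

theorem Type1Diam.iSup_eigenspace_zpow_eq_top {d : ℕ} (hT : Type1Diam F q π d) (i : ZMod 4) :
    ⨆ m : ℤ, (π (bx F q i)).eigenspace (q ^ m) = ⊤ := by
  refine top_le_iff.mp ((hT i).1.ge.trans (iSup_le fun θ => ?_))
  by_cases hθ : (π (bx F q i)).eigenspace θ = ⊥
  · simp [hθ]
  · obtain ⟨n, -, rfl⟩ := (hT i).2.subset hθ
    exact le_iSup (fun m : ℤ => (π (bx F q i)).eigenspace (q ^ m)) _

theorem Type1Diam.not_isNilpotent {d : ℕ} (hT : Type1Diam F q π d) (hq0 : q ≠ 0) (i : ZMod 4) :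
    ¬ IsNilpotent (π (bx F q i)) := by
  intro hnil
  have heig : (π (bx F q i)).HasEigenvalue (q ^ ((d : ℤ) - 2 * (0 : ℕ))) :=
    (hT i).2.superset ⟨0, d.zero_le, rfl⟩
  exact zpow_ne_zero _ hq0 (heig.isNilpotent_of_isNilpotent hnil).eq_zero

theorem mem_invtSubmodule_of_bx_zero_of_bx_two [FiniteDimensional F V]
    (hq : Function.Injective fun m : ℤ => q ^ m)
    (hπ : ∀ i, ⨆ m : ℤ, (π (bx F q i)).eigenspace (q ^ m) = ⊤) {W : Submodule F V}
    (hW₀ : W ∈ (π (bx F q 0)).invtSubmodule) (hW₂ : W ∈ (π (bx F q 2)).invtSubmodule)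
    (a : BoxQ F q) : W ∈ (π a).invtSubmodule := by
  have h₀₁ : IsQWeylPair q (π (bx F q 0)) (π (bx F q 1)) := (isQWeylPair_bx q 0).map π
  have h₁₂ : IsQWeylPair q (π (bx F q 1)) (π (bx F q 2)) := (isQWeylPair_bx q 1).map π
  have h₂₃ : IsQWeylPair q (π (bx F q 2)) (π (bx F q 3)) := (isQWeylPair_bx q 2).map π
  have h₃₀ : IsQWeylPair q (π (bx F q 3)) (π (bx F q 0)) := (isQWeylPair_bx q 3).map π
  refine mem_invtSubmodule_of_forall_bx (fun i => ?_) a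
  fin_cases i
  · exact hW₀
  · exact mem_invtSubmodule_of_isQWeylPair_cycle hq h₀₁ h₁₂ h₂₃ h₃₀ (hπ 0) (hπ 1) (hπ 2) hW₀ hW₂
  · exact hW₂
  · exact mem_invtSubmodule_of_isQWeylPair_cycle hq h₂₃ h₃₀ h₀₁ h₁₂ (hπ 2) (hπ 3) (hπ 0) hW₂ hW₀

end BoxModules

theorem stmt10_general (q : F) (hq0 : q ≠ 0)
    (hq1 : ∀ n : ℕ, 0 < n → q ^ n ≠ 1)
    (V : Type) [AddCommGroup V] [Module F V] [FiniteDimensional F V]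
    (π : BoxQ F q →ₐ[F] Module.End F V) (hirr : IsIrrep F π)
    (d : ℕ) (hT : Type1Diam F q π d)
    (κ : Uqp F q →ₐ[F] BoxQ F q)
    (hκx : κ (ux F q) = bx F q 0) (hκy : κ (uy F q) = bx F q 2) :
    IsIrrep F (π.comp κ) ∧
    ¬ IsNilpotent ((π.comp κ) (ux F q)) ∧ ¬ IsNilpotent ((π.comp κ) (uy F q)) ∧
    SemisimpleOn F ((π.comp κ) (ux F q)) ∧ SemisimpleOn F ((π.comp κ) (uy F q)) ∧
    EigSet F ((π.comp κ) (ux F q)) =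
      {θ : F | ∃ n : ℕ, n ≤ d ∧ θ = q ^ ((d : ℤ) - 2 * (n : ℤ))} ∧
    EigSet F ((π.comp κ) (uy F q)) =
      {θ : F | ∃ n : ℕ, n ≤ d ∧ θ = q ^ ((d : ℤ) - 2 * (n : ℤ))} := by
  have hx : (π.comp κ) (ux F q) = π (bx F q 0) := by rw [AlgHom.comp_apply, hκx]
  have hy : (π.comp κ) (uy F q) = π (bx F q 2) := by rw [AlgHom.comp_apply, hκy]
  have hirr' : IsIrrep F (π.comp κ) := by
    refine ⟨hirr.1, fun W hW => hirr.2 W ?_⟩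
    have hW₀ : W ∈ (π (bx F q 0)).invtSubmodule := hx ▸ hW (ux F q)
    have hW₂ : W ∈ (π (bx F q 2)).invtSubmodule := hy ▸ hW (uy F q)
    exact mem_invtSubmodule_of_bx_zero_of_bx_two (injective_zpow_of_forall_pow_ne_one hq0 hq1)
      hT.iSup_eigenspace_zpow_eq_top hW₀ hW₂
  rw [hx, hy]
  exact ⟨hirr', hT.not_isNilpotent hq0 0, hT.not_isNilpotent hq0 2, (hT 0).1, (hT 2).1,
    (hT 0).2, (hT 2).2⟩

/-- The pullback along `κ : U_q^+ → □_q` of a type-1 irreducible `□_q`-module of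
diameter `d` is a NonNil irreducible `U_q^+`-module of type `(1,1)` and diameter `d`. -/
theorem stmt10 [IsAlgClosed F] [CharZero F] (q : F) (hq0 : q ≠ 0)
    (hq1 : ∀ n : ℕ, 0 < n → q ^ n ≠ 1)
    (V : Type) [AddCommGroup V] [Module F V] [FiniteDimensional F V]
    (π : BoxQ F q →ₐ[F] Module.End F V) (hirr : IsIrrep F π)
    (d : ℕ) (hT : Type1Diam F q π d)
    (κ : Uqp F q →ₐ[F] BoxQ F q)
    (hκx : κ (ux F q) = bx F q 0) (hκy : κ (uy F q) = bx F q 2) :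
    IsIrrep F (π.comp κ) ∧
    ¬ IsNilpotent ((π.comp κ) (ux F q)) ∧ ¬ IsNilpotent ((π.comp κ) (uy F q)) ∧
    SemisimpleOn F ((π.comp κ) (ux F q)) ∧ SemisimpleOn F ((π.comp κ) (uy F q)) ∧
    EigSet F ((π.comp κ) (ux F q)) =
      {θ : F | ∃ n : ℕ, n ≤ d ∧ θ = q ^ ((d : ℤ) - 2 * (n : ℤ))} ∧
    EigSet F ((π.comp κ) (uy F q)) =
      {θ : F | ∃ n : ℕ, n ≤ d ∧ θ = q ^ ((d : ℤ) - 2 * (n : ℤ))} :=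
  stmt10_general F q hq0 hq1 V π hirr d hT κ hκx hκy
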